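/- arXiv:0912.4904 — 2 statements merged into one kernel-verified Lean document; each statement's English description precedes it below -/
import Mathlib

section
/- Refinement of Nesterenko's criterion: Let τ₁, τ₂ > 0 and σ(n) a non-decreasing positive function with σ(n) → ∞. Let θ₁,…,θ_m be real numbers. Assume that for all sufficiently large n there is an integer linear form L_n(X) = Σ_{i=0}^m ℓ_{in} X_i with Σ_i |ℓ_{in}| ≤ e^{σ(n)} and e^{−(τ₁+o(1))σ(n)} ≤ |L_n(1,θ₁,…,θ_m)| ≤ e^{−(τ₂+o(1))σ(n+1)}. Then the dimension over ℚ of the vector space ℚ + ℚθ₁ + ⋯ + ℚθ_m is at least (1+τ₁)/(1+τ₁−τ₂). -/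
open Filter

lemma dirichlet_sim {ι : Type*} [Fintype ι] [DecidableEq ι] (α : ι → ℝ) (M : ℕ) (hM : 0 < M) :
    ∃ q : ℕ, 1 ≤ q ∧ q ≤ M ^ Fintype.card ι ∧ ∃ p : ι → ℤ, ∀ j, |(q : ℝ) * α j - p j| ≤ 1 / M := by
  have hM' : (0 : ℝ) < M := by exact_mod_cast hM
  have hb : ∀ x : ℝ, ⌊(M : ℝ) * Int.fract x⌋₊ < M := by
    intro x
    rw [Nat.floor_lt (by have := Int.fract_nonneg x; positivity)]
    have := Int.fract_lt_one x
    nlinarith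
  let f : Fin (M ^ Fintype.card ι + 1) → (ι → Fin M) :=
    fun q j => ⟨⌊(M : ℝ) * Int.fract ((q : ℕ) * α j)⌋₊, hb _⟩
  obtain ⟨a, b, hab, hf⟩ := Fintype.exists_ne_map_eq_of_card_lt f (by simp)
  wlog hlt : a < b generalizing a b
  · exact this b a hab.symm hf.symm (lt_of_le_of_ne (not_lt.mp hlt) hab.symm)
  have hlt' : (a : ℕ) < b := hlt
  refine ⟨b - a, by omega, by have := b.2; omega,
    fun j => ⌊((b : ℕ) : ℝ) * α j⌋ - ⌊((a : ℕ) : ℝ) * α j⌋, fun j => ?_⟩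
  have h1 : ⌊(M : ℝ) * Int.fract ((a : ℕ) * α j)⌋₊ = ⌊(M : ℝ) * Int.fract ((b : ℕ) * α j)⌋₊ := by
    have := congrFun hf j
    simpa [f] using this
  have ha0 := Nat.floor_le (a := (M : ℝ) * Int.fract ((a : ℕ) * α j))
    (by have := Int.fract_nonneg ((a : ℕ) * α j); positivity)
  have hb0 := Nat.floor_le (a := (M : ℝ) * Int.fract ((b : ℕ) * α j))
    (by have := Int.fract_nonneg ((b : ℕ) * α j); positivity)
  have ha1 := Nat.lt_floor_add_one ((M : ℝ) * Int.fract ((a : ℕ) * α j))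
  have hb1 := Nat.lt_floor_add_one ((M : ℝ) * Int.fract ((b : ℕ) * α j))
  rw [h1] at ha0 ha1
  have e : (((b : ℕ) - (a : ℕ) : ℕ) : ℝ) * α j
      - ((⌊((b : ℕ) : ℝ) * α j⌋ - ⌊((a : ℕ) : ℝ) * α j⌋ : ℤ) : ℝ)
      = Int.fract ((b : ℕ) * α j) - Int.fract ((a : ℕ) * α j) := by
    rw [Nat.cast_sub hlt'.le, Int.fract, Int.fract]
    push_cast
    ring
  rw [e, le_div_iff₀ hM', ← abs_of_pos hM', ← abs_mul, abs_le]
  constructor <;> linarith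

lemma common_den {ι : Type*} [Fintype ι] [DecidableEq ι] (f : ι → ℚ) :
    ∃ D : ℕ, 0 < D ∧ ∀ i, ∃ z : ℤ, (D : ℚ) * f i = z := by
  refine ⟨∏ i, (f i).den, Finset.prod_pos fun i _ => (f i).den_pos, fun i => ?_⟩
  refine ⟨(∏ j ∈ Finset.univ.erase i, (f j).den : ℕ) * (f i).num, ?_⟩
  rw [← Finset.prod_erase_mul _ _ (Finset.mem_univ i)]
  push_cast
  rw [mul_assoc, Rat.den_mul_eq_num]

lemma approx_fam (m : ℕ) (θ : Fin m → ℝ) :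
    ∃ k : ℕ, Module.finrank ℚ (Submodule.span ℚ (insert (1 : ℝ) (Set.range θ))) = k + 1 ∧
    ∃ C : ℝ, 0 < C ∧ ∀ M : ℕ, 0 < M → ∃ q : ℕ, 1 ≤ q ∧ (q : ℝ) ≤ C * (M : ℝ) ^ k ∧
      ∃ Y : Fin (m + 1) → ℤ, ∀ i,
        |(q : ℝ) * (Fin.cons 1 θ : Fin (m + 1) → ℝ) i - Y i| ≤ C / M := by
  classical
  set η : Fin (m + 1) → ℝ := Fin.cons 1 θ with hη
  obtain ⟨b, hbt, h1b, htb, hli⟩ := exists_linearIndepOn_id_extension (K := ℚ)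
    (s := {(1 : ℝ)}) (t := insert (1 : ℝ) (Set.range θ))
    (LinearIndepOn.singleton one_ne_zero) (by simp)
  have hfin : b.Finite := ((Set.finite_range θ).insert 1).subset hbt
  haveI : Fintype b := hfin.fintype
  have hone : (1 : ℝ) ∈ b := h1b rfl
  have hspan : Submodule.span ℚ (insert (1 : ℝ) (Set.range θ)) = Submodule.span ℚ b :=
    le_antisymm (Submodule.span_le.mpr htb) (Submodule.span_mono hbt)
  have hcard : Module.finrank ℚ (Submodule.span ℚ (insert (1 : ℝ) (Set.range θ)))
      = Fintype.card b := by
    rw [hspan]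
    have := finrank_span_eq_card (R := ℚ) (b := ((↑) : b → ℝ)) hli
    rwa [Subtype.range_coe] at this
  let o : b := ⟨1, hone⟩
  have hsub : Fintype.card {x : b // x ≠ o} + 1 = Fintype.card b := by
    have : 0 < Fintype.card b := Fintype.card_pos_iff.mpr ⟨o⟩
    have h2 : Fintype.card {x : b // x ≠ o} = Fintype.card b - 1 := by
      simp [Fintype.card_subtype_compl]
    omega
  refine ⟨Fintype.card {x : b // x ≠ o}, by rw [hcard, hsub], ?_⟩
  have hmem : ∀ i, ∃ c : b → ℚ, ∑ x, c x • (x : ℝ) = η i := by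
    intro i
    have : η i ∈ Submodule.span ℚ (Set.range ((↑) : b → ℝ)) := by
      rw [Subtype.range_coe]
      apply htb
      refine Fin.cases ?_ (fun j => ?_) i
      · simp [hη]
      · simp [hη]
    exact (Submodule.mem_span_range_iff_exists_fun ℚ).mp this
  choose c hc using hmem
  obtain ⟨D, hD, hz⟩ := common_den (fun ix : Fin (m + 1) × b => c ix.1 ix.2)
  choose z hz using hz
  have hDη : ∀ i, (D : ℝ) * η i = ∑ x, (z (i, x) : ℝ) * (x : ℝ) := by
    intro i
    rw [← hc i, Finset.mul_sum]
    refine Finset.sum_congr rfl fun x _ => ?_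
    have h := hz (i, x)
    have h' : (D : ℝ) * (c i x : ℝ) = (z (i, x) : ℝ) := by exact_mod_cast congrArg (Rat.cast : ℚ → ℝ) h
    rw [← h', Rat.smul_def, mul_assoc]
  set A : ℝ := ∑ i, ∑ x, |(z (i, x) : ℝ)| with hA
  have hA0 : 0 ≤ A := Finset.sum_nonneg fun i _ => Finset.sum_nonneg fun x _ => abs_nonneg _
  refine ⟨D + A, by positivity, fun M hM => ?_⟩
  obtain ⟨q, hq1, hq2, p, hp⟩ := dirichlet_sim (fun x : {x : b // x ≠ o} => ((x : b) : ℝ)) M hM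
  let P : b → ℤ := fun x => if h : x ≠ o then p ⟨x, h⟩ else q
  have hP : ∀ x : b, |(q : ℝ) * (x : ℝ) - P x| ≤ 1 / M := by
    intro x
    by_cases h : x ≠ o
    · simpa [P, h] using hp ⟨x, h⟩
    · push Not at h
      subst h
      simp [P, o]
  refine ⟨q * D, Nat.mul_pos hq1 hD, ?_, fun i => ∑ x, z (i, x) * P x, fun i => ?_⟩
  · have : (q : ℝ) ≤ (M : ℝ) ^ Fintype.card {x : b // x ≠ o} := by exact_mod_cast hq2
    push_cast
    rw [mul_comm]
    apply mul_le_mul _ this (by positivity) (by positivity)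
    linarith
  · have e : ((q * D : ℕ) : ℝ) * η i - ((∑ x, z (i, x) * P x : ℤ) : ℝ)
        = ∑ x, (z (i, x) : ℝ) * ((q : ℝ) * (x : ℝ) - P x) := by
      push_cast
      rw [mul_assoc, hDη, Finset.mul_sum, ← Finset.sum_sub_distrib]
      exact Finset.sum_congr rfl fun x _ => by ring
    rw [e]
    calc |∑ x, (z (i, x) : ℝ) * ((q : ℝ) * (x : ℝ) - P x)|
        ≤ ∑ x, |(z (i, x) : ℝ) * ((q : ℝ) * (x : ℝ) - P x)| := Finset.abs_sum_le_sum_abs _ _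
      _ ≤ ∑ x, |(z (i, x) : ℝ)| * (1 / M) := by
          refine Finset.sum_le_sum fun x _ => ?_
          rw [abs_mul]
          exact mul_le_mul_of_nonneg_left (hP x) (abs_nonneg _)
      _ = (∑ x, |(z (i, x) : ℝ)|) * (1 / M) := by rw [Finset.sum_mul]
      _ ≤ A * (1 / M) := by
          apply mul_le_mul_of_nonneg_right _ (by positivity)
          exact Finset.single_le_sum (f := fun i => ∑ x, |(z (i, x) : ℝ)|)
            (fun i _ => Finset.sum_nonneg fun x _ => abs_nonneg _) (Finset.mem_univ i)
      _ ≤ (D + A) / M := by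
          rw [mul_one_div]
          gcongr
          linarith [(Nat.cast_nonneg D : (0:ℝ) ≤ D)]

/-- Either `q |L|` is bounded below by one half minus the error or is bounded by the error. -/
lemma int_dichotomy {m : ℕ} (η : Fin (m + 1) → ℝ) (l Y : Fin (m + 1) → ℤ) (q : ℕ) (B S : ℝ)
    (hB : 0 ≤ B) (hS : ((∑ i, |l i| : ℤ) : ℝ) ≤ S)
    (hY : ∀ i, |(q : ℝ) * η i - Y i| ≤ B)
    (hq : (q : ℝ) * |∑ i, (l i : ℝ) * η i| < 1 / 2) :
    1 / 2 ≤ S * B ∨ (q : ℝ) * |∑ i, (l i : ℝ) * η i| ≤ S * B := by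
  set L := ∑ i, (l i : ℝ) * η i with hL
  have e : (q : ℝ) * L - ((∑ i, l i * Y i : ℤ) : ℝ) = ∑ i, (l i : ℝ) * ((q : ℝ) * η i - Y i) := by
    push_cast
    rw [hL, Finset.mul_sum, ← Finset.sum_sub_distrib]
    exact Finset.sum_congr rfl fun x _ => by ring
  have hE : |(q : ℝ) * L - ((∑ i, l i * Y i : ℤ) : ℝ)| ≤ S * B := by
    rw [e]
    calc _ ≤ ∑ i, |(l i : ℝ) * ((q : ℝ) * η i - Y i)| := Finset.abs_sum_le_sum_abs _ _
      _ ≤ ∑ i, |(l i : ℝ)| * B := by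
          refine Finset.sum_le_sum fun x _ => ?_
          rw [abs_mul]
          exact mul_le_mul_of_nonneg_left (hY x) (abs_nonneg _)
      _ = ((∑ i, |l i| : ℤ) : ℝ) * B := by rw [← Finset.sum_mul]; push_cast; rfl
      _ ≤ S * B := mul_le_mul_of_nonneg_right hS hB
  have hqL : (q : ℝ) * |L| = |(q : ℝ) * L| := by rw [abs_mul, Nat.abs_cast]
  rw [hqL] at hq ⊢
  generalize (∑ i, l i * Y i : ℤ) = I at hE
  by_cases hI : I = 0
  · right
    simpa [hI] using hE
  · left
    have h1 : (1 : ℝ) ≤ |(I : ℝ)| := by exact_mod_cast Int.one_le_abs hI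
    have h2 := abs_sub_abs_le_abs_sub (I : ℝ) ((q : ℝ) * L)
    rw [abs_sub_comm] at h2
    linarith

theorem nesterenko_refined (m : ℕ) (θ : Fin m → ℝ) (τ₁ τ₂ : ℝ) (hτ₁ : 0 < τ₁) (hτ₂ : 0 < τ₂)
    (σ : ℕ → ℝ) (hσpos : ∀ n, 0 < σ n) (hσmono : Monotone σ)
    (hσinf : Tendsto σ atTop atTop)
    (ℓ : ℕ → Fin (m + 1) → ℤ) (ε₁ ε₂ : ℕ → ℝ)
    (hε₁ : Tendsto ε₁ atTop (nhds 0)) (hε₂ : Tendsto ε₂ atTop (nhds 0))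
    (hmain : ∃ N, ∀ n ≥ N,
      ((∑ i, |ℓ n i| : ℤ) : ℝ) ≤ Real.exp (σ n) ∧
      Real.exp (-(τ₁ + ε₁ n) * σ n) ≤
        |∑ i, (ℓ n i : ℝ) * (Fin.cons 1 θ : Fin (m + 1) → ℝ) i| ∧
      |∑ i, (ℓ n i : ℝ) * (Fin.cons 1 θ : Fin (m + 1) → ℝ) i| ≤
        Real.exp (-(τ₂ + ε₂ n) * σ (n + 1))) :
    (1 + τ₁) / (1 + τ₁ - τ₂) ≤
      (Module.finrank ℚ (Submodule.span ℚ (insert (1 : ℝ) (Set.range θ))) : ℝ) := by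
  obtain ⟨N, hN⟩ := hmain
  obtain ⟨k, hk, C, hC, happ⟩ := approx_fam m θ
  rw [hk]
  set η : Fin (m + 1) → ℝ := Fin.cons 1 θ with hη
  set L : ℕ → ℝ := fun n => |∑ i, (ℓ n i : ℝ) * η i| with hL
  have h12 : τ₂ ≤ τ₁ := by
    have h : ∀ᶠ n in atTop, τ₂ + ε₂ n ≤ τ₁ + ε₁ n := by
      have h0 : ∀ᶠ n in atTop, -τ₂ < ε₂ n := hε₂.eventually (lt_mem_nhds (by linarith))
      filter_upwards [h0, eventually_ge_atTop N] with n hn hnN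
      have h1 := (hN n hnN).2.1.trans (hN n hnN).2.2
      rw [Real.exp_le_exp] at h1
      have h2 := hσmono (Nat.le_succ n)
      have h3 := hσpos n
      have h4 : (τ₂ + ε₂ n) * σ n ≤ (τ₂ + ε₂ n) * σ (n + 1) :=
        mul_le_mul_of_nonneg_left h2 (by linarith)
      by_contra! hcon
      nlinarith
    have := le_of_tendsto_of_tendsto (hε₂.const_add τ₂) (hε₁.const_add τ₁) h
    simpa using this
  have key : ∀ δ : ℝ, 0 < δ → δ < τ₂ → τ₂ - 2 * δ ≤ k * (1 + τ₁ - τ₂ + 2 * δ) := by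
    intro δ hδ hδ2
    set K : ℝ := 2 * C * (2 * C) ^ k with hK
    have hKpos : 0 < K := by positivity
    have hev : ∀ᶠ n in atTop, N ≤ n ∧ ε₁ n < δ ∧ -δ < ε₂ n ∧ Real.log K / δ ≤ σ n := by
      filter_upwards [eventually_ge_atTop N, hε₁.eventually (gt_mem_nhds hδ),
        hε₂.eventually (lt_mem_nhds (neg_lt_zero.mpr hδ)),
        hσinf.eventually (eventually_ge_atTop (Real.log K / δ))] with n h1 h2 h3 h4
      exact ⟨h1, h2, h3, h4⟩
    obtain ⟨N0, hN0⟩ := eventually_atTop.mp hev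
    have hLpos : ∀ n ≥ N0, 0 < L n := fun n hn =>
      (Real.exp_pos _).trans_le (hN n (hN0 n hn).1).2.1
    have hLup : ∀ n ≥ N0, L n ≤ Real.exp (-((τ₂ - δ) * σ (n + 1))) := fun n hn => by
      refine (hN n (hN0 n hn).1).2.2.trans (Real.exp_le_exp.mpr ?_)
      have := hσpos (n + 1)
      have := (hN0 n hn).2.2.1
      nlinarith
    have hLlow : ∀ n ≥ N0, Real.exp (-((τ₁ + δ) * σ n)) ≤ L n := fun n hn => by
      refine le_trans (Real.exp_le_exp.mpr ?_) (hN n (hN0 n hn).1).2.1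
      have := hσpos n
      have := (hN0 n hn).2.1
      nlinarith
    -- choose M large
    set w : ℝ := min (1 / 2) (L N0) with hw
    have hwpos : 0 < w := lt_min (by norm_num) (hLpos N0 le_rfl)
    obtain ⟨M, hM⟩ := exists_nat_gt (Real.exp (σ N0) * C / w)
    have hM0 : (0 : ℝ) < M := lt_of_le_of_lt (by positivity) hM
    obtain ⟨q, hq1, hq2, Y, hY⟩ := happ M (by exact_mod_cast hM0)
    have hq1' : (1 : ℝ) ≤ q := by exact_mod_cast hq1
    have hMw : Real.exp (σ N0) * (C / M) < w := by
      rw [div_lt_iff₀ hwpos] at hM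
      rw [← mul_div_assoc, div_lt_iff₀ hM0]
      linarith
    have hLlim : Tendsto (fun n => (q : ℝ) * L n) atTop (nhds 0) := by
      have h1 : Tendsto (fun n => Real.exp (-((τ₂ - δ) * σ (n + 1)))) atTop (nhds 0) := by
        apply Real.tendsto_exp_neg_atTop_nhds_zero.comp
        exact (hσinf.comp (tendsto_add_atTop_nat 1)).const_mul_atTop (by linarith)
      have h2 : Tendsto L atTop (nhds 0) := by
        refine tendsto_of_tendsto_of_tendsto_of_le_of_le' tendsto_const_nhds h1 ?_ ?_
        · exact Eventually.of_forall fun n => abs_nonneg _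
        · filter_upwards [eventually_ge_atTop N0] with n hn using hLup n hn
      simpa using h2.const_mul (q : ℝ)
    have hex : ∃ n, N0 ≤ n ∧ (q : ℝ) * L n < 1 / 2 :=
      ((eventually_ge_atTop N0).and (hLlim.eventually (gt_mem_nhds (by norm_num)))).exists
    classical
    set n := Nat.find hex with hn
    obtain ⟨hnN0, hnq⟩ := Nat.find_spec hex
    rw [← hn] at hnN0 hnq
    have hdich : ∀ n ≥ N0, (q : ℝ) * L n < 1 / 2 →
        1 / 2 ≤ Real.exp (σ n) * (C / M) ∨ (q : ℝ) * L n ≤ Real.exp (σ n) * (C / M) :=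
      fun n hn hq => int_dichotomy η (ℓ n) Y q _ _ (by positivity) (hN n (hN0 n hn).1).1 hY hq
    have hne : n ≠ N0 := by
      intro h
      have h1 := hdich n hnN0 hnq
      rw [h] at h1
      have h2 : w ≤ 1 / 2 := min_le_left _ _
      have h3 : w ≤ L N0 := min_le_right _ _
      have h4 : L N0 ≤ q * L N0 := le_mul_of_one_le_left (hLpos N0 le_rfl).le hq1'
      rcases h1 with h1 | h1 <;> linarith
    obtain ⟨n', hn'⟩ : ∃ n', n = n' + 1 := ⟨n - 1, by omega⟩
    have hn'N0 : N0 ≤ n' := by omega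
    have hprev : 1 / 2 ≤ (q : ℝ) * L n' := by
      by_contra! hcon
      exact Nat.find_min hex (m := n') (by omega) ⟨hn'N0, hcon⟩
    have hs := hσpos n
    have hqlow : Real.exp ((τ₂ - δ) * σ n) ≤ 2 * q := by
      have h1 := hLup n' hn'N0
      rw [← hn', Real.exp_neg] at h1
      have h2 : 1 / 2 ≤ (q : ℝ) * (Real.exp ((τ₂ - δ) * σ n))⁻¹ :=
        hprev.trans (mul_le_mul_of_nonneg_left h1 (by linarith))
      rw [← div_eq_mul_inv, le_div_iff₀ (Real.exp_pos _)] at h2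
      linarith
    have hMup : (M : ℝ) ≤ 2 * C * Real.exp ((1 + τ₁ - τ₂ + 2 * δ) * σ n) := by
      have h1 : Real.exp (-((τ₁ - τ₂ + 2 * δ) * σ n)) / 2 ≤ Real.exp (σ n) * (C / M) := by
        rcases hdich n hnN0 hnq with h | h
        · refine le_trans ?_ h
          have : Real.exp (-((τ₁ - τ₂ + 2 * δ) * σ n)) ≤ 1 := by
            rw [Real.exp_le_one_iff, neg_nonpos]
            exact mul_nonneg (by linarith) hs.le
          linarith
        · refine le_trans ?_ h
          have h2 := hLlow n hnN0
          have h3 : Real.exp (-((τ₁ - τ₂ + 2 * δ) * σ n))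
              = Real.exp ((τ₂ - δ) * σ n) * Real.exp (-((τ₁ + δ) * σ n)) := by
            rw [← Real.exp_add]; congr 1; ring
          rw [h3]
          have := mul_le_mul hqlow h2 (Real.exp_pos _).le (by linarith)
          linarith
      rw [← mul_div_assoc, le_div_iff₀ hM0, Real.exp_neg] at h1
      have h4 : Real.exp ((1 + τ₁ - τ₂ + 2 * δ) * σ n)
          = Real.exp ((τ₁ - τ₂ + 2 * δ) * σ n) * Real.exp (σ n) := by
        rw [← Real.exp_add]; congr 1; ring
      rw [h4]
      have hpos := Real.exp_pos ((τ₁ - τ₂ + 2 * δ) * σ n)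
      have h5 := mul_le_mul_of_nonneg_left h1 hpos.le
      have h6 : Real.exp ((τ₁ - τ₂ + 2 * δ) * σ n) *
          ((Real.exp ((τ₁ - τ₂ + 2 * δ) * σ n))⁻¹ / 2 * M) = M / 2 := by
        field_simp
      rw [h6] at h5
      linarith
    have hfin : Real.exp ((τ₂ - δ) * σ n)
        ≤ K * Real.exp (k * ((1 + τ₁ - τ₂ + 2 * δ) * σ n)) := by
      calc Real.exp ((τ₂ - δ) * σ n) ≤ 2 * (C * (M : ℝ) ^ k) := by linarith
        _ ≤ 2 * (C * (2 * C * Real.exp ((1 + τ₁ - τ₂ + 2 * δ) * σ n)) ^ k) := by gcongr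
        _ = _ := by rw [mul_pow, Real.exp_nat_mul, hK]; ring
    rw [← Real.exp_log hKpos, ← Real.exp_add, Real.exp_le_exp] at hfin
    have h7 := (hN0 n hnN0).2.2.2
    rw [div_le_iff₀ hδ] at h7
    have h8 : (τ₂ - 2 * δ) * σ n ≤ (k * (1 + τ₁ - τ₂ + 2 * δ)) * σ n := by linarith
    exact le_of_mul_le_mul_right h8 hs
  have hlim : τ₂ ≤ k * (1 + τ₁ - τ₂) := by
    have t1 : Tendsto (fun δ : ℝ => τ₂ - 2 * δ) (nhdsWithin 0 (Set.Ioi 0)) (nhds τ₂) := by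
      have : Continuous (fun δ : ℝ => τ₂ - 2 * δ) := by fun_prop
      simpa using (this.tendsto 0).mono_left nhdsWithin_le_nhds
    have t2 : Tendsto (fun δ : ℝ => k * (1 + τ₁ - τ₂ + 2 * δ)) (nhdsWithin 0 (Set.Ioi 0))
        (nhds (k * (1 + τ₁ - τ₂))) := by
      have : Continuous (fun δ : ℝ => k * (1 + τ₁ - τ₂ + 2 * δ)) := by fun_prop
      simpa using (this.tendsto 0).mono_left nhdsWithin_le_nhds
    refine le_of_tendsto_of_tendsto t1 t2 ?_
    filter_upwards [Ioo_mem_nhdsGT hτ₂] with δ hδ using key δ hδ.1 hδ.2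
  rw [div_le_iff₀ (by linarith)]
  push_cast
  linarith
end

section
/- Under the hypotheses of the refined Nesterenko criterion (integer linear forms L_n in 1, θ₁,…,θ_m with coefficient sum ≤ e^{σ(n)} and e^{−(τ₁+o(1))σ(n)} ≤ |L_n(1,θ)| ≤ e^{−(τ₂+o(1))σ(n+1)}), if ℓ is an integer with τ₁ > (ℓ−1) + (τ₁−τ₂)ℓ, then dim_ℚ(ℚ + ℚθ₁ + ⋯ + ℚθ_m) ≥ ℓ + 1. In particular, if τ₁ > (m−1) + m(τ₁−τ₂), then 1, θ₁, …, θ_m are linearly independent over ℚ. -/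
open Filter

theorem nest_dirichlet (k : ℕ) (θ : Fin k → ℝ) (Q : ℕ) (hQ : 0 < Q) :
    ∃ q : ℕ, 0 < q ∧ q ≤ Q ^ k ∧ ∀ i, |(q : ℝ) * θ i - round ((q : ℝ) * θ i)| ≤ 1 / Q := by
  classical
  have hQ' : (0 : ℝ) < Q := by exact_mod_cast hQ
  have hfl : ∀ x : ℝ, ⌊(Q : ℝ) * Int.fract x⌋₊ < Q := by
    intro x
    rw [Nat.floor_lt (by have := Int.fract_nonneg x; positivity)]
    have := Int.fract_lt_one x
    nlinarith
  let f : Fin (Q ^ k + 1) → (Fin k → Fin Q) := fun j i =>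
    ⟨⌊(Q : ℝ) * Int.fract ((j : ℕ) * θ i)⌋₊, hfl _⟩
  obtain ⟨x, y, hxy, hf⟩ := Fintype.exists_ne_map_eq_of_card_lt f (by simp)
  wlog hlt : x < y generalizing x y
  · exact this y x hxy.symm hf.symm (lt_of_le_of_ne (not_lt.mp hlt) hxy.symm)
  have hlt' : (x : ℕ) < y := hlt
  refine ⟨y - x, by omega, by omega, fun i => ?_⟩
  have h1 := congrArg (fun g => ((g i : Fin Q) : ℕ)) hf
  simp only [f] at h1
  refine (round_le _ (⌊((y : ℕ) : ℝ) * θ i⌋ - ⌊((x : ℕ) : ℝ) * θ i⌋)).trans ?_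
  rw [Nat.cast_sub hlt'.le]
  set u := ((x : ℕ) : ℝ) * θ i with hu
  set v := ((y : ℕ) : ℝ) * θ i with hv
  have e : (((y : ℕ) : ℝ) - ((x : ℕ) : ℝ)) * θ i - ((⌊v⌋ - ⌊u⌋ : ℤ) : ℝ)
      = Int.fract v - Int.fract u := by
    push_cast
    unfold Int.fract
    rw [hu, hv]; ring
  rw [e, le_div_iff₀ hQ']
  have p1 : (0 : ℝ) ≤ Q * Int.fract u := by have := Int.fract_nonneg u; positivity
  have p2 : (0 : ℝ) ≤ Q * Int.fract v := by have := Int.fract_nonneg v; positivity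
  have a1 := Nat.floor_le p1
  have a2 := Nat.lt_floor_add_one ((Q : ℝ) * Int.fract u)
  have a3 := Nat.floor_le p2
  have a4 := Nat.lt_floor_add_one ((Q : ℝ) * Int.fract v)
  rw [h1] at a1 a2
  have : |Int.fract v - Int.fract u| * Q = |Q * Int.fract v - Q * Int.fract u| := by
    rw [← mul_sub, abs_mul, abs_of_pos hQ', mul_comm]
  rw [this, abs_le]
  constructor <;> linarith

theorem nest_dirichlet' (k : ℕ) (θ : Fin k → ℝ) (P : ℕ) :
    ∃ q : ℕ, 0 < q ∧ P ≤ q ∧ ∃ p : Fin k → ℤ, ∀ i, |(q : ℝ) * θ i - p i| ^ k * q ≤ 1 := by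
  classical
  by_cases h : ∃ Q : ℕ, 0 < Q ∧ ∃ q : ℕ, 0 < q ∧ P ≤ q ∧ q ≤ Q ^ k ∧
      ∀ i, |(q : ℝ) * θ i - round ((q : ℝ) * θ i)| ≤ 1 / Q
  · obtain ⟨Q, hQ, q, hq, hP, hqQ, hi⟩ := h
    have hQ' : (0 : ℝ) < Q := by exact_mod_cast hQ
    refine ⟨q, hq, hP, fun i => round ((q : ℝ) * θ i), fun i => ?_⟩
    have hqQ' : (q : ℝ) ≤ (Q : ℝ) ^ k := by exact_mod_cast hqQ
    calc _ ≤ (1 / (Q : ℝ)) ^ k * (Q : ℝ) ^ k := by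
            gcongr
            exact hi i
      _ = 1 := by rw [← mul_pow, one_div_mul_cancel hQ'.ne', one_pow]
  · push Not at h
    have h2 : ∀ Q : ℕ, ∃ q : Fin P, 0 < (q : ℕ) ∧
        ∀ i, |((q : ℕ) : ℝ) * θ i - round (((q : ℕ) : ℝ) * θ i)| ≤ 1 / ((Q + 1 : ℕ) : ℝ) := by
      intro Q
      obtain ⟨q, hq, hqQ, hi⟩ := nest_dirichlet k θ (Q + 1) (Nat.succ_pos _)
      have hlt : q < P := by
        by_contra hc
        obtain ⟨i, hi'⟩ := h (Q + 1) (Nat.succ_pos _) q hq (not_lt.mp hc) hqQ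
        exact absurd (hi i) (not_le.mpr hi')
      exact ⟨⟨q, hlt⟩, hq, hi⟩
    choose g hg0 hg using h2
    obtain ⟨q, hq⟩ := Finite.exists_infinite_fiber g
    have hinf : (g ⁻¹' {q}).Infinite := Set.infinite_coe_iff.mp hq
    obtain ⟨Q0, hQ0⟩ := hinf.nonempty
    have hqpos : 0 < (q : ℕ) := by have := hg0 Q0; rwa [show g Q0 = q from hQ0] at this
    have hz : ∀ i, ((q : ℕ) : ℝ) * θ i - round (((q : ℕ) : ℝ) * θ i) = 0 := by
      intro i
      by_contra hne
      have hpos := abs_pos.mpr hne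
      obtain ⟨M, hM⟩ := exists_nat_one_div_lt hpos
      obtain ⟨Q, hQ, hMQ⟩ := hinf.exists_gt M
      have := hg Q i
      rw [show g Q = q from hQ] at this
      have h3 : 1 / ((Q + 1 : ℕ) : ℝ) ≤ 1 / ((M : ℝ) + 1) := by
        apply one_div_le_one_div_of_le (by positivity)
        push_cast
        have : (M : ℝ) < Q := by exact_mod_cast hMQ
        linarith
      linarith
    refine ⟨q * (P + 1), by positivity, by nlinarith, 
      fun i => round (((q : ℕ) : ℝ) * θ i) * ((P : ℤ) + 1), fun i => ?_⟩
    have : (((q : ℕ) * (P + 1) : ℕ) : ℝ) * θ i -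
        ((round (((q : ℕ) : ℝ) * θ i) * ((P : ℤ) + 1) : ℤ) : ℝ) = 0 := by
      push_cast
      linear_combination ((P : ℝ) + 1) * hz i
    rw [this]
    rcases Nat.eq_zero_or_pos k with rfl | hk
    · exact i.elim0
    · simp [hk.ne']

theorem nest_core (k : ℕ) (θ : Fin k → ℝ) (τ₁ τ₂ : ℝ) (hτ₂ : 0 < τ₂)
    (σ : ℕ → ℝ) (hσinf : Tendsto σ atTop atTop)
    (a0 : ℕ → ℤ) (a : ℕ → Fin k → ℤ) (C c D : ℝ) (hC : 0 < C) (hc : 0 < c) (hD : 0 < D)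
    (hmain : ∀ η > 0, ∀ᶠ n in atTop, (∀ i, |(a n i : ℝ)| ≤ C * Real.exp (σ n)) ∧
      c * Real.exp (-(τ₁ + η) * σ n) ≤ |(a0 n : ℝ) + ∑ i, (a n i : ℝ) * θ i| ∧
      |(a0 n : ℝ) + ∑ i, (a n i : ℝ) * θ i| ≤ D * Real.exp (-(τ₂ - η) * σ (n + 1)))
    (h : (k : ℝ) * (1 + τ₁) < (k + 1) * τ₂) : False := by
  classical
  obtain ⟨η, hη, hη2, hη1⟩ : ∃ η : ℝ, 0 < η ∧ η < τ₂ ∧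
      0 < (k + 1) * (τ₂ - η) - k * (1 + τ₁ + η) := by
    set g := (k + 1) * τ₂ - k * (1 + τ₁) with hg
    have hg0 : 0 < g := by rw [hg]; linarith
    have hk : (0 : ℝ) < 2 * k + 2 := by positivity
    refine ⟨min (τ₂ / 2) (g / (2 * k + 2)), by positivity,
      (min_le_left _ _).trans_lt (by linarith), ?_⟩
    have h1 : min (τ₂ / 2) (g / (2 * k + 2)) ≤ g / (2 * k + 2) := min_le_right _ _
    rw [le_div_iff₀ hk] at h1
    have h2 : 0 < min (τ₂ / 2) (g / (2 * k + 2)) := by positivity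
    nlinarith
  set κ := (k + 1) * (τ₂ - η) - k * (1 + τ₁ + η) with hκ
  set K : ℝ := (C * (k + 1) / c) ^ k * (2 * D) ^ (k + 1) with hK
  have hτη : 0 < τ₂ - η := by linarith
  have hlarge : ∀ᶠ n in atTop, K < Real.exp (κ * σ n) :=
    (Real.tendsto_exp_atTop.comp (hσinf.const_mul_atTop hη1)).eventually_gt_atTop K
  obtain ⟨N, hN⟩ := eventually_atTop.mp ((hmain η hη).and hlarge)
  obtain ⟨P, hP⟩ := exists_nat_gt (Real.exp ((τ₂ - η) * σ (N + 1)) / D)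
  obtain ⟨q, hq0, hPq, p, hp⟩ := nest_dirichlet' k θ P
  have hq0' : (0 : ℝ) < q := by exact_mod_cast hq0
  have hex : ∃ n, N ≤ n ∧ (q : ℝ) * D * Real.exp (-(τ₂ - η) * σ (n + 1)) < 1 / 2 := by
    have ht : Tendsto (fun n => (τ₂ - η) * σ (n + 1)) atTop atTop :=
      (hσinf.comp (tendsto_add_atTop_nat 1)).const_mul_atTop hτη
    have ht2 : Tendsto (fun n => (q : ℝ) * D * Real.exp (-((τ₂ - η) * σ (n + 1)))) atTop
        (nhds ((q : ℝ) * D * 0)) :=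
      (Real.tendsto_exp_neg_atTop_nhds_zero.comp ht).const_mul _
    rw [mul_zero] at ht2
    obtain ⟨n, h1, h2⟩ := ((eventually_ge_atTop N).and
      (ht2.eventually_lt_const (by norm_num : (0 : ℝ) < 1 / 2))).exists
    exact ⟨n, h1, by simpa only [neg_mul] using h2⟩
  set n := Nat.find hex with hn
  obtain ⟨hNn, hn1⟩ := Nat.find_spec hex
  rw [← hn] at hNn hn1
  have hne : n ≠ N := by
    intro he
    rw [he] at hn1
    have h1 : Real.exp ((τ₂ - η) * σ (N + 1)) < q * D := by
      rw [← div_lt_iff₀ hD]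
      exact hP.trans_le (by exact_mod_cast hPq)
    have h2 : Real.exp ((τ₂ - η) * σ (N + 1)) * Real.exp (-(τ₂ - η) * σ (N + 1)) = 1 := by
      rw [← Real.exp_add, ← Real.exp_zero]; congr 1; ring
    have h3 := mul_lt_mul_of_pos_right h1 (Real.exp_pos (-(τ₂ - η) * σ (N + 1)))
    linarith
  have hpred : 1 / 2 ≤ (q : ℝ) * D * Real.exp (-(τ₂ - η) * σ n) := by
    have h1 := Nat.find_min hex (m := n - 1) (by omega)
    have h2 : n - 1 + 1 = n := by omega
    rw [h2] at h1
    by_contra hcon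
    exact h1 ⟨by omega, not_le.mp hcon⟩
  obtain ⟨⟨hcoef, hlow, hup⟩, hbig⟩ := hN n hNn
  set s := σ n with hs
  set A := (a0 n : ℝ) + ∑ i, (a n i : ℝ) * θ i with hA
  have hApos : 0 < |A| := lt_of_lt_of_le (by positivity) hlow
  have hqA : (q : ℝ) * |A| < 1 / 2 := by
    refine lt_of_le_of_lt ?_ hn1
    rw [mul_assoc]; gcongr
  -- lower bound for q
  have hqlow : Real.exp ((τ₂ - η) * s) ≤ 2 * D * q := by
    have h2 : Real.exp ((τ₂ - η) * s) * Real.exp (-(τ₂ - η) * s) = 1 := by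
      rw [← Real.exp_add, ← Real.exp_zero]; congr 1; ring
    have h3 := Real.exp_pos ((τ₂ - η) * s)
    nlinarith
  have hδ : ∀ i, C * Real.exp s * |(q : ℝ) * θ i - p i| * (k + 1) ≤ q * |A| := by
    intro i
    by_contra hcon
    rw [not_le] at hcon
    set δ := |(q : ℝ) * θ i - p i| with hδd
    have hδ0 : 0 ≤ δ := abs_nonneg _
    have h1 : (q : ℝ) * Real.exp (-(τ₁ + η) * s) ≤ (C * (k + 1) / c) * Real.exp s * δ := by
      have : (q : ℝ) * (c * Real.exp (-(τ₁ + η) * s)) ≤ C * Real.exp s * δ * (k + 1) :=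
        (mul_le_mul_of_nonneg_left hlow hq0'.le).trans hcon.le
      rw [show (C * (k + 1) / c) * Real.exp s * δ = (C * Real.exp s * δ * (k + 1)) / c by ring,
        le_div_iff₀ hc]
      linarith
    have h2 := pow_le_pow_left₀ (by positivity) h1 k
    have h3 : ((q : ℝ) * Real.exp (-(τ₁ + η) * s)) ^ k * q ≤
        ((C * (k + 1) / c) * Real.exp s) ^ k := by
      calc _ ≤ ((C * (k + 1) / c) * Real.exp s * δ) ^ k * q := by gcongr
        _ = ((C * (k + 1) / c) * Real.exp s) ^ k * (δ ^ k * q) := by rw [mul_pow _ δ k]; ring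
        _ ≤ ((C * (k + 1) / c) * Real.exp s) ^ k * 1 := by gcongr; exact hp i
        _ = _ := mul_one _
    have h4 := pow_le_pow_left₀ (by positivity) hqlow (k + 1)
    have e1 : Real.exp (κ * s) * Real.exp s ^ k =
        Real.exp ((τ₂ - η) * s) ^ (k + 1) * Real.exp (-(τ₁ + η) * s) ^ k := by
      simp only [← Real.exp_nat_mul, ← Real.exp_add]
      congr 1
      rw [hκ]; push_cast; ring
    have h5 : Real.exp (κ * s) * Real.exp s ^ k ≤ K * Real.exp s ^ k := by
      rw [e1]
      calc _ ≤ (2 * D * q) ^ (k + 1) * Real.exp (-(τ₁ + η) * s) ^ k := by gcongr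
        _ = (2 * D) ^ (k + 1) * (((q : ℝ) * Real.exp (-(τ₁ + η) * s)) ^ k * q) := by ring
        _ ≤ (2 * D) ^ (k + 1) * ((C * (k + 1) / c) * Real.exp s) ^ k := by gcongr
        _ = _ := by rw [hK, mul_pow _ (Real.exp s) k]; ring
    have h6 := le_of_mul_le_mul_right h5 (by positivity)
    linarith
  -- the error term
  set E := ∑ i, (a n i : ℝ) * ((q : ℝ) * θ i - p i) with hE
  have hEb : |E| < q * |A| := by
    have h1 : |E| ≤ ∑ i : Fin k, q * |A| / (k + 1) := by
      refine (Finset.abs_sum_le_sum_abs _ _).trans (Finset.sum_le_sum fun i _ => ?_)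
      rw [abs_mul, le_div_iff₀ (by positivity)]
      refine le_trans ?_ (hδ i)
      gcongr
      exact hcoef i
    refine h1.trans_lt ?_
    rw [Finset.sum_const, Finset.card_univ, Fintype.card_fin, nsmul_eq_mul, ← mul_div_assoc,
      div_lt_iff₀ (by positivity)]
    have : 0 < (q : ℝ) * |A| := by positivity
    nlinarith
  have hI : ((a0 n * q + ∑ i, a n i * p i : ℤ) : ℝ) = q * A - E := by
    push_cast
    rw [hA, hE, mul_add, Finset.mul_sum, add_sub_assoc, ← Finset.sum_sub_distrib, mul_comm]
    congr 1
    exact Finset.sum_congr rfl fun i _ => by ring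
  have hqAabs : |(q : ℝ) * A| = q * |A| := by rw [abs_mul, abs_of_pos hq0']
  have hIlt : |((a0 n * q + ∑ i, a n i * p i : ℤ) : ℝ)| < 1 := by
    rw [hI]
    have := abs_sub (q * A) E
    linarith
  have hI0 : a0 n * q + ∑ i, a n i * p i = 0 := by
    rw [← Int.abs_lt_one_iff]
    exact_mod_cast hIlt
  rw [hI0, Int.cast_zero] at hI
  have : (q : ℝ) * A = E := by linarith
  rw [← this, hqAabs] at hEb
  exact lt_irrefl _ hEb

theorem nest_dim (m : ℕ) (θ : Fin m → ℝ)
    (τ₁ τ₂ : ℝ) (hτ₁ : 0 < τ₁) (hτ₂ : 0 < τ₂)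
    (σ : ℕ → ℝ) (hσpos : ∀ n, 0 < σ n)
    (hσinf : Tendsto σ atTop atTop)
    (ℓ : ℕ → Fin (m + 1) → ℤ) (ε₁ ε₂ : ℕ → ℝ)
    (hε₁ : Tendsto ε₁ atTop (nhds 0)) (hε₂ : Tendsto ε₂ atTop (nhds 0))
    (hmain : ∃ N, ∀ n ≥ N,
      ((∑ i, |ℓ n i| : ℤ) : ℝ) ≤ Real.exp (σ n) ∧
      Real.exp (-(τ₁ + ε₁ n) * σ n) ≤
        |∑ i, (ℓ n i : ℝ) * (Fin.cons 1 θ : Fin (m + 1) → ℝ) i| ∧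
      |∑ i, (ℓ n i : ℝ) * (Fin.cons 1 θ : Fin (m + 1) → ℝ) i| ≤
        Real.exp (-(τ₂ + ε₂ n) * σ (n + 1)))
    (l : ℤ) (hl : τ₁ > ((l : ℝ) - 1) + (τ₁ - τ₂) * (l : ℝ)) :
    ((l : ℝ) + 1 ≤
      (Module.finrank ℚ (Submodule.span ℚ
        (Set.range (Fin.cons 1 θ : Fin (m + 1) → ℝ))) : ℝ)) := by
  classical
  set ξ : Fin (m + 1) → ℝ := Fin.cons 1 θ with hξ
  set V := Submodule.span ℚ (Set.range ξ) with hV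
  haveI : FiniteDimensional ℚ V := FiniteDimensional.span_of_finite ℚ (Set.finite_range ξ)
  have hmem : ∀ j, ξ j ∈ V := fun j => Submodule.subset_span ⟨j, rfl⟩
  have hpos : 0 < Module.finrank ℚ V := by
    rw [Module.finrank_pos_iff]
    refine ⟨⟨⟨ξ 0, hmem 0⟩, 0, ?_⟩⟩
    intro h
    have : ξ 0 = 0 := congrArg Subtype.val h
    simp [hξ] at this
  obtain ⟨k, hk⟩ : ∃ k, Module.finrank ℚ V = k + 1 := ⟨_, (Nat.succ_pred_eq_of_pos hpos).symm⟩
  by_contra hcon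
  rw [not_le, hk] at hcon
  have hkl : (k : ℝ) + 1 ≤ l := by
    have : ((k + 1 : ℕ) : ℤ) < l + 1 := by exact_mod_cast hcon
    have : ((k + 1 : ℕ) : ℤ) ≤ l := by omega
    exact_mod_cast this
  have hineq : (k : ℝ) * (1 + τ₁) < (k + 1) * τ₂ := by
    have hk0 : (0 : ℝ) ≤ k := Nat.cast_nonneg k
    rcases le_or_gt (1 + τ₁ - τ₂) 0 with h0 | h0 <;> nlinarith
  let b : Module.Basis (Fin (k + 1)) ℚ V := Module.finBasisOfFinrankEq ℚ V hk
  have hb0 : ((b 0 : V) : ℝ) ≠ 0 := by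
    intro h
    exact b.ne_zero 0 (Subtype.ext h)
  obtain ⟨M, hM⟩ := IsLocalization.exist_integer_multiples_of_finite (nonZeroDivisors ℤ)
    (fun x : Fin (m + 1) × Fin (k + 1) => b.repr ⟨ξ x.1, hmem x.1⟩ x.2)
  choose z hz using hM
  have hM0 : (M : ℤ) ≠ 0 := nonZeroDivisors.coe_ne_zero M
  have hM0' : ((M : ℤ) : ℝ) ≠ 0 := by exact_mod_cast hM0
  have hexp : ∀ j, ((M : ℤ) : ℝ) * ξ j = ∑ i, (z (j, i) : ℝ) * ((b i : V) : ℝ) := by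
    intro j
    have h1 := congrArg (Subtype.val) (b.sum_repr ⟨ξ j, hmem j⟩)
    simp only [Submodule.coe_sum, Submodule.coe_smul] at h1
    rw [← h1, Finset.mul_sum]
    refine Finset.sum_congr rfl fun i _ => ?_
    have h2 := congrArg (fun r : ℚ => (r : ℝ)) (hz (j, i))
    simp [zsmul_eq_mul] at h2
    rw [h2, Rat.smul_def]; ring
  -- coefficients
  let a : ℕ → Fin (k + 1) → ℤ := fun n i => ∑ j, ℓ n j * z (j, i)
  let Z : ℤ := 1 + ∑ x, |z x|
  have hZ : ∀ x, |z x| ≤ Z := fun x => by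
    have := Finset.single_le_sum (f := fun x => |z x|) (fun _ _ => abs_nonneg _) (Finset.mem_univ x)
    simp only [Z]; linarith
  have hZpos : 0 < Z := by
    have : 0 ≤ ∑ x, |z x| := Finset.sum_nonneg fun _ _ => abs_nonneg _
    simp only [Z]; linarith
  have hZpos' : (0 : ℝ) < Z := by exact_mod_cast hZpos
  have ha : ∀ n i, |a n i| ≤ Z * ∑ j, |ℓ n j| := by
    intro n i
    refine (Finset.abs_sum_le_sum_abs _ _).trans ?_
    rw [Finset.mul_sum]
    refine Finset.sum_le_sum fun j _ => ?_
    rw [abs_mul, mul_comm]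
    exact mul_le_mul_of_nonneg_right (hZ _) (abs_nonneg _)
  set G : ℝ := ((M : ℤ) : ℝ) / ((b 0 : V) : ℝ) with hG
  have hG0 : G ≠ 0 := div_ne_zero hM0' hb0
  have hA : ∀ n, (a n 0 : ℝ) + ∑ i : Fin k, (a n i.succ : ℝ) * (((b i.succ : V) : ℝ) / ((b 0 : V) : ℝ))
      = G * ∑ j, (ℓ n j : ℝ) * ξ j := by
    intro n
    have h1 : ((M : ℤ) : ℝ) * ∑ j, (ℓ n j : ℝ) * ξ j = ∑ i, (a n i : ℝ) * ((b i : V) : ℝ) := by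
      simp only [a, Int.cast_sum, Int.cast_mul, Finset.sum_mul]
      rw [Finset.sum_comm, Finset.mul_sum]
      refine Finset.sum_congr rfl fun j _ => ?_
      rw [mul_left_comm, hexp, Finset.mul_sum]
      exact Finset.sum_congr rfl fun i _ => by ring
    rw [hG, div_mul_eq_mul_div, h1, Fin.sum_univ_succ, add_div, mul_div_cancel_right₀ _ hb0,
      Finset.sum_div]
    congr 1
    exact Finset.sum_congr rfl fun i _ => by ring
  refine nest_core k (fun i => ((b i.succ : V) : ℝ) / ((b 0 : V) : ℝ)) τ₁ τ₂ hτ₂ σ hσinf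
    (fun n => a n 0) (fun n i => a n i.succ) Z |G| |G| hZpos' (abs_pos.mpr hG0)
    (abs_pos.mpr hG0) ?_ hineq
  intro η hη
  obtain ⟨N, hN⟩ := hmain
  filter_upwards [eventually_ge_atTop N, hε₁.eventually_lt_const hη,
    hε₂.eventually_const_lt (neg_lt_zero.mpr hη)] with n hn h1 h2
  obtain ⟨c1, c2, c3⟩ := hN n hn
  have s1 := hσpos n
  have s2 := hσpos (n + 1)
  refine ⟨fun i => ?_, ?_, ?_⟩
  · have h3 : ((|a n i.succ| : ℤ) : ℝ) ≤ ((Z * ∑ j, |ℓ n j| : ℤ) : ℝ) := by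
      exact_mod_cast ha n i.succ
    rw [Int.cast_mul, Int.cast_abs] at h3
    exact h3.trans (mul_le_mul_of_nonneg_left c1 hZpos'.le)
  · rw [hA, abs_mul]
    refine mul_le_mul_of_nonneg_left (le_trans ?_ c2) (abs_nonneg _)
    rw [Real.exp_le_exp]
    nlinarith
  · rw [hA, abs_mul]
    refine mul_le_mul_of_nonneg_left (c3.trans ?_) (abs_nonneg _)
    rw [Real.exp_le_exp]
    nlinarith

theorem nesterenko_refined_consequences (m : ℕ) (θ : Fin m → ℝ)
    (τ₁ τ₂ : ℝ) (hτ₁ : 0 < τ₁) (hτ₂ : 0 < τ₂)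
    (σ : ℕ → ℝ) (hσpos : ∀ n, 0 < σ n) (hσmono : Monotone σ)
    (hσinf : Tendsto σ atTop atTop)
    (ℓ : ℕ → Fin (m + 1) → ℤ) (ε₁ ε₂ : ℕ → ℝ)
    (hε₁ : Tendsto ε₁ atTop (nhds 0)) (hε₂ : Tendsto ε₂ atTop (nhds 0))
    (hmain : ∃ N, ∀ n ≥ N,
      ((∑ i, |ℓ n i| : ℤ) : ℝ) ≤ Real.exp (σ n) ∧
      Real.exp (-(τ₁ + ε₁ n) * σ n) ≤
        |∑ i, (ℓ n i : ℝ) * (Fin.cons 1 θ : Fin (m + 1) → ℝ) i| ∧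
      |∑ i, (ℓ n i : ℝ) * (Fin.cons 1 θ : Fin (m + 1) → ℝ) i| ≤
        Real.exp (-(τ₂ + ε₂ n) * σ (n + 1)))
    (l : ℤ) (hl : τ₁ > ((l : ℝ) - 1) + (τ₁ - τ₂) * (l : ℝ)) :
    ((l : ℝ) + 1 ≤
      (Module.finrank ℚ (Submodule.span ℚ (insert (1 : ℝ) (Set.range θ))) : ℝ)) ∧
    (τ₁ > ((m : ℝ) - 1) + (m : ℝ) * (τ₁ - τ₂) →
      LinearIndependent ℚ (Fin.cons 1 θ : Fin (m + 1) → ℝ)) := by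
  have hr : Set.range (Fin.cons 1 θ : Fin (m + 1) → ℝ) = insert (1 : ℝ) (Set.range θ) :=
    Fin.range_cons 1 θ
  refine ⟨?_, fun hm => ?_⟩
  · rw [← hr]
    exact nest_dim m θ τ₁ τ₂ hτ₁ hτ₂ σ hσpos hσinf ℓ ε₁ ε₂ hε₁ hε₂ hmain l hl
  · have h1 := nest_dim m θ τ₁ τ₂ hτ₁ hτ₂ σ hσpos hσinf ℓ ε₁ ε₂ hε₁ hε₂ hmain (m : ℤ)
      (by push_cast; linarith)
    rw [linearIndependent_iff_card_le_finrank_span, Fintype.card_fin]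
    exact_mod_cast h1
end
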